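/- Under the assumptions of the previous statement, the optimal value V*(τ) = min_η J^τ(η) satisfies V*(τ) = -(1/2) N*(τ)². -/

import Mathlib

open MeasureTheory Filter
open scoped RealInnerProductSpace

/-- The state trajectory `z(t;ψ,f) = T_t ψ + ∫_0^t T_{t-σ} B f(σ) dσ`. -/
noncomputable def traj {X U : Type*} [NormedAddCommGroup X] [NormedSpace ℝ X] [CompleteSpace X]
    [NormedAddCommGroup U] [NormedSpace ℝ U]
    (T : ℝ → X →L[ℝ] X) (B : U →L[ℝ] X) (ψ : X) (u : ℝ → U) (t : ℝ) : X :=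
  T t ψ + ∫ σ in Set.Ioc 0 t, T (t - σ) (B (u σ))

/-- The functional `J^τ(η) = ½(∫_0^τ ‖B*T*_{τ-t}η‖ dt)² + ⟨ψ, T*_τ η⟩ + r‖η‖`. -/
noncomputable def Jfun {X U : Type*} [NormedAddCommGroup X] [InnerProductSpace ℝ X]
    [CompleteSpace X] [NormedAddCommGroup U] [InnerProductSpace ℝ U] [CompleteSpace U]
    (T : ℝ → X →L[ℝ] X) (B : U →L[ℝ] X) (r : ℝ) (ψ : X) (τ : ℝ) (η : X) : ℝ :=
  (1 / 2) * (∫ t in Set.Ioc 0 τ, ‖B.adjoint ((T (τ - t)).adjoint η)‖) ^ 2 +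
    ⟪ψ, (T τ).adjoint η⟫ + r * ‖η‖

lemma aux_weak_meas {H : Type*} [NormedAddCommGroup H] [InnerProductSpace ℝ H] [CompleteSpace H]
    (g : ℝ → H) (h : ∀ v : H, Continuous fun t => ⟪v, g t⟫) : StronglyMeasurable g := by
  classical
  let V : ℕ → Submodule ℝ H := fun n =>
    Submodule.span ℝ ((fun i : ℕ => g (TopologicalSpace.denseSeq ℝ i)) '' (Set.Iio n))
  have hfin : ∀ n, FiniteDimensional ℝ (V n) := fun n =>
    FiniteDimensional.span_of_finite ℝ ((Set.finite_Iio n).image _)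
  have hmono : Monotone V := fun m n hmn =>
    Submodule.span_mono (Set.image_mono (Set.Iio_subset_Iio hmn))
  have hmem : ∀ t, g t ∈ (⨆ n, V n).topologicalClosure := by
    intro t
    rw [← Submodule.orthogonal_orthogonal_eq_closure, Submodule.mem_orthogonal]
    intro u hu
    have hz : (fun t => ⟪u, g t⟫) = fun _ => 0 := by
      refine Continuous.ext_on (TopologicalSpace.denseRange_denseSeq ℝ) (h u) continuous_const ?_
      rintro _ ⟨i, rfl⟩
      have : g (TopologicalSpace.denseSeq ℝ i) ∈ ⨆ n, V n :=
        (le_iSup V (i + 1)) (Submodule.subset_span ⟨i, by simp, rfl⟩)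
      exact (Submodule.mem_orthogonal' _ _).1 hu _ this
    exact congrFun hz t
  refine stronglyMeasurable_of_tendsto (u := atTop)
    (f := fun n t => (V n).starProjection (g t)) ?_ ?_
  · intro n
    have := hfin n
    have e : (fun t => (V n).starProjection (g t)) = fun t =>
        ∑ i, ⟪((stdOrthonormalBasis ℝ (V n) i : V n) : H), g t⟫ •
          ((stdOrthonormalBasis ℝ (V n) i : V n) : H) := by
      funext t
      rw [(stdOrthonormalBasis ℝ (V n)).starProjection_eq_sum_rankOne]
      simp
    rw [e]
    exact (continuous_finsetSum _ fun i _ => (h _).smul continuous_const).stronglyMeasurable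
  · rw [tendsto_pi_nhds]
    intro t
    have := Submodule.starProjection_tendsto_closure_iSup V hmono (g t)
    rwa [Submodule.starProjection_eq_self_iff.2 (hmem t)] at this

lemma aux_bound {X : Type*} [NormedAddCommGroup X] [NormedSpace ℝ X] [CompleteSpace X]
    (T : ℝ → X →L[ℝ] X) (hTcont : ∀ x : X, Continuous fun t => T t x) (a b : ℝ) :
    ∃ M, 0 ≤ M ∧ ∀ t ∈ Set.Icc a b, ‖T t‖ ≤ M := by
  obtain ⟨M, hM⟩ := banach_steinhaus (g := fun t : Set.Icc a b => T t) (by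
    intro x
    obtain ⟨C, hC⟩ := (isCompact_Icc (a := a) (b := b)).exists_bound_of_continuousOn
      (hTcont x).continuousOn
    exact ⟨C, fun i => hC i i.2⟩)
  exact ⟨max M 0, le_max_right _ _, fun t ht => (hM ⟨t, ht⟩).trans (le_max_left _ _)⟩

lemma aux_joint {X : Type*} [NormedAddCommGroup X] [NormedSpace ℝ X] [CompleteSpace X]
    (T : ℝ → X →L[ℝ] X) (hTcont : ∀ x : X, Continuous fun t => T t x) :
    Continuous fun p : ℝ × X => T p.1 p.2 := by
  rw [continuous_iff_continuousAt]
  rintro ⟨t₀, x₀⟩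
  obtain ⟨M, hM0, hM⟩ := aux_bound T hTcont (t₀ - 1) (t₀ + 1)
  rw [ContinuousAt, tendsto_iff_norm_sub_tendsto_zero]
  have hc : Continuous fun p : ℝ × X => M * ‖p.2 - x₀‖ + ‖T p.1 x₀ - T t₀ x₀‖ := by
    have := (hTcont x₀).comp (continuous_fst (X := ℝ) (Y := X))
    simp only [Function.comp_def] at this
    fun_prop
  have hl := hc.tendsto (t₀, x₀)
  simp only [sub_self, norm_zero, mul_zero, add_zero] at hl
  refine squeeze_zero' (Eventually.of_forall fun _ => norm_nonneg _) ?_ hl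
  have hn : ∀ᶠ p : ℝ × X in nhds (t₀, x₀), p.1 ∈ Set.Icc (t₀ - 1) (t₀ + 1) :=
    continuous_fst.tendsto (t₀, x₀) |>.eventually (Icc_mem_nhds (by simp) (by simp))
  filter_upwards [hn] with p hp
  calc ‖T p.1 p.2 - T t₀ x₀‖ = ‖T p.1 (p.2 - x₀) + (T p.1 x₀ - T t₀ x₀)‖ := by
        rw [map_sub]; congr 1; abel
    _ ≤ ‖T p.1 (p.2 - x₀)‖ + ‖T p.1 x₀ - T t₀ x₀‖ := norm_add_le _ _
    _ ≤ _ := by gcongr; exact (T p.1).le_of_opNorm_le (hM _ hp) _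

lemma aux_norm_deriv {H : Type*} [NormedAddCommGroup H] [InnerProductSpace ℝ H]
    (a b : H) (ha : a ≠ 0) :
    HasDerivAt (fun ε : ℝ => ‖a + ε • b‖) (⟪a, b⟫ / ‖a‖) 0 := by
  have h1 : HasDerivAt (fun ε : ℝ => a + ε • b) b 0 := by
    simpa using ((hasDerivAt_id (0 : ℝ)).smul_const b).const_add a
  have h2 := h1.norm_sq.sqrt (by simpa using ha)
  have e : (fun ε : ℝ => ‖a + ε • b‖) = fun ε : ℝ => √(‖a + ε • b‖ ^ 2) := by
    funext ε; rw [Real.sqrt_sq (norm_nonneg _)]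
  rw [e]
  refine h2.congr_deriv ?_
  simp [Real.sqrt_sq (norm_nonneg _)]
  have : ‖a‖ ≠ 0 := by simpa using ha
  field_simp

/-- Under the assumptions of Statement 11, the optimal value
`V*(τ) = min_η J^τ(η)` satisfies `V*(τ) = -(1/2) N*(τ)²`. -/
theorem stmt12 {X U : Type*} [NormedAddCommGroup X] [InnerProductSpace ℝ X] [CompleteSpace X]
    [NormedAddCommGroup U] [InnerProductSpace ℝ U] [CompleteSpace U]
    (T : ℝ → X →L[ℝ] X) (B : U →L[ℝ] X)
    (hT0 : T 0 = 1)
    (hTadd : ∀ s t : ℝ, 0 ≤ s → 0 ≤ t → T (s + t) = (T s).comp (T t))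
    (hTcont : ∀ x : X, Continuous fun t => T t x)
    -- unique continuation
    (hUC : ∀ η : X, ∀ s : Set ℝ, MeasurableSet s → 0 < volume s →
      (∀ t ∈ s, B.adjoint ((T t).adjoint η) = 0) → η = 0)
    (r : ℝ) (hr : 0 < r) (ψ : X) (τ : ℝ) (hτ : 0 < τ)
    (hTψ : T τ ψ ∉ Metric.closedBall (0 : X) r)
    -- `η̂` is the minimizer of `J^τ`
    (ηh : X) (hηh : ∀ ξ : X, Jfun T B r ψ τ ηh ≤ Jfun T B r ψ τ ξ)
    -- `N*(τ)` is the minimal `L^∞`-norm of controls steering `ψ` into `B(0,r)` at time `τ`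
    (Nstar : ℝ)
    (hNstar : IsLeast {C : ℝ | 0 ≤ C ∧ ∃ f : ℝ → U,
      AEStronglyMeasurable f (volume.restrict (Set.Ioo 0 τ)) ∧
      (∀ᵐ t ∂volume.restrict (Set.Ioo 0 τ), ‖f t‖ ≤ C) ∧
      traj T B ψ f τ ∈ Metric.closedBall (0 : X) r} Nstar) :
    Jfun T B r ψ τ ηh = -(1 / 2) * Nstar ^ 2 := by
  
  classical
  set μ : Measure ℝ := volume.restrict (Set.Ioc 0 τ) with hμ
  have hμeq : volume.restrict (Set.Ioo 0 τ) = μ :=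
    Measure.restrict_congr_set Ioo_ae_eq_Ioc
  have hτmem : ∀ᵐ t ∂μ, t ∈ Set.Ioc 0 τ := ae_restrict_mem measurableSet_Ioc
  obtain ⟨M, hM0, hM⟩ := aux_bound T hTcont 0 τ
  let G : X → ℝ → U := fun η t => B.adjoint ((T (τ - t)).adjoint η)
  have hGinner : ∀ η v t, ⟪v, G η t⟫ = ⟪T (τ - t) (B v), η⟫ := by
    intro η v t
    simp only [G, ContinuousLinearMap.adjoint_inner_right]
  have hGsm : ∀ η, StronglyMeasurable (G η) := by
    intro η
    refine aux_weak_meas _ fun v => ?_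
    simp only [hGinner]
    exact ((hTcont (B v)).comp (continuous_const.sub continuous_id)).inner continuous_const
  have hGb : ∀ η, ∀ t ∈ Set.Ioc 0 τ, ‖G η t‖ ≤ ‖B‖ * (M * ‖η‖) := by
    intro η t ht
    have h1 : ‖(T (τ - t)).adjoint η‖ ≤ M * ‖η‖ := by
      refine ContinuousLinearMap.le_of_opNorm_le _ ?_ _
      rw [LinearIsometryEquiv.norm_map]
      exact hM _ ⟨by linarith [ht.2], by linarith [ht.1]⟩
    calc ‖G η t‖ ≤ ‖B.adjoint‖ * ‖(T (τ - t)).adjoint η‖ := B.adjoint.le_opNorm _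
      _ ≤ _ := by rw [LinearIsometryEquiv.norm_map]; gcongr
  have hGint : ∀ η, Integrable (G η) μ := fun η =>
    Integrable.of_bound (hGsm η).aestronglyMeasurable (‖B‖ * (M * ‖η‖))
      (hτmem.mono fun t ht => hGb η t ht)
  have hGadd : ∀ η ξ (ε : ℝ) t, G (η + ε • ξ) t = G η t + ε • G ξ t := by
    intro η ξ ε t; simp [G]
  have hTB : ∀ (f : ℝ → U) (C : ℝ), AEStronglyMeasurable f μ → (∀ᵐ t ∂μ, ‖f t‖ ≤ C) →
      ∀ ξ, ⟪∫ σ, T (τ - σ) (B (f σ)) ∂μ, ξ⟫ = ∫ σ, ⟪f σ, G ξ σ⟫ ∂μ := by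
    intro f C hf hC ξ
    have hmeas : AEStronglyMeasurable (fun σ => T (τ - σ) (B (f σ))) μ := by
      have h1 : AEStronglyMeasurable (fun σ => ((τ - σ, B (f σ)) : ℝ × X)) μ :=
        AEStronglyMeasurable.prodMk
          (continuous_const.sub continuous_id).aestronglyMeasurable
          (B.continuous.comp_aestronglyMeasurable hf)
      exact (aux_joint T hTcont).comp_aestronglyMeasurable h1
    have hint : Integrable (fun σ => T (τ - σ) (B (f σ))) μ := by
      refine Integrable.of_bound hmeas (M * (‖B‖ * C)) ?_
      filter_upwards [hτmem, hC] with t ht htC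
      calc ‖T (τ - t) (B (f t))‖ ≤ M * ‖B (f t)‖ :=
            (T (τ - t)).le_of_opNorm_le (hM _ ⟨by linarith [ht.2], by linarith [ht.1]⟩) _
        _ ≤ M * (‖B‖ * C) := by
            gcongr
            exact (B.le_opNorm _).trans (by gcongr)
    rw [real_inner_comm, ← integral_inner hint ξ]
    refine integral_congr_ae (Eventually.of_forall fun σ => ?_)
    simp only [hGinner]
    rw [real_inner_comm]
  let I : X → ℝ := fun η => ∫ t, ‖G η t‖ ∂μ
  have hJ : ∀ η, Jfun T B r ψ τ η = (1 / 2) * I η ^ 2 + ⟪T τ ψ, η⟫ + r * ‖η‖ := by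
    intro η
    simp only [Jfun, I, G, ContinuousLinearMap.adjoint_inner_right, hμ]
  have hI0 : ∀ η, 0 ≤ I η := fun η => integral_nonneg fun _ => norm_nonneg _
  -- weak duality
  obtain ⟨⟨hN0, f, hfm, hfb, hft⟩, hleast⟩ := hNstar
  rw [hμeq] at hfm hfb
  have hweak : -(1 / 2) * Nstar ^ 2 ≤ Jfun T B r ψ τ ηh := by
    have h1 := hTB f Nstar hfm hfb ηh
    have h2 : ∫ σ, ⟪f σ, G ηh σ⟫ ∂μ ≤ Nstar * I ηh := by
      simp only [I]
      rw [← integral_const_mul]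
      refine integral_mono_ae ?_ ((hGint ηh).norm.const_mul _) ?_
      · refine Integrable.mono' ((hGint ηh).norm.const_mul Nstar)
          (hfm.inner (hGsm ηh).aestronglyMeasurable) ?_
        filter_upwards [hfb] with t ht
        exact (norm_inner_le_norm _ _).trans (by gcongr)
      · filter_upwards [hfb] with t ht
        exact (real_inner_le_norm _ _).trans (by gcongr)
    have h3 : ‖traj T B ψ f τ‖ ≤ r := by simpa using hft
    have h4 : -(r * ‖ηh‖) ≤ ⟪traj T B ψ f τ, ηh⟫ := by
      have := abs_real_inner_le_norm (traj T B ψ f τ) ηh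
      have h5 : ‖traj T B ψ f τ‖ * ‖ηh‖ ≤ r * ‖ηh‖ := by gcongr
      linarith [neg_abs_le ⟪traj T B ψ f τ, ηh⟫]
    rw [traj, inner_add_left, ← hμ, h1] at h4
    rw [hJ]
    nlinarith [sq_nonneg (I ηh - Nstar)]
  -- the minimizer is nonzero
  have hne : ηh ≠ 0 := by
    rintro rfl
    set w := T τ ψ with hw
    have hwr : r < ‖w‖ := by simpa using hTψ
    set d := ‖w‖ ^ 2 - r * ‖w‖ with hd
    have hdpos : 0 < d := by nlinarith
    have hIs : ∀ ε : ℝ, 0 < ε → I ((-ε) • w) = ε * I w := by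
      intro ε hε
      simp only [I]
      rw [← integral_const_mul]
      refine integral_congr_ae (Eventually.of_forall fun t => ?_)
      simp [G, norm_smul, abs_of_pos hε]
    have hq : 0 < I w ^ 2 + 1 := by positivity
    have hε : 0 < d / (I w ^ 2 + 1) := div_pos hdpos hq
    set ε := d / (I w ^ 2 + 1) with hεd
    have h1 := hηh ((-ε) • w)
    have hz : Jfun T B r ψ τ 0 = 0 := by simp [Jfun]
    rw [hz, hJ, hIs ε hε, inner_smul_right, real_inner_self_eq_norm_sq, norm_smul,
      norm_neg, Real.norm_of_nonneg hε.le] at h1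
    have h2 : 0 ≤ ε * ((1 / 2) * (ε * I w ^ 2) - d) := by rw [hd]; nlinarith
    have h3 : 0 ≤ (1 / 2) * (ε * I w ^ 2) - d := nonneg_of_mul_nonneg_right h2 hε
    have h4 : ε * (I w ^ 2 + 1) = d := div_mul_cancel₀ _ hq.ne'
    nlinarith
  have hnorm : ‖ηh‖ ≠ 0 := by simpa using hne
  -- nonvanishing a.e.
  have hnz : ∀ᵐ t ∂μ, G ηh t ≠ 0 := by
    have hms : MeasurableSet {t | G ηh t = 0} := by
      have : {t | G ηh t = 0} = (fun t => ‖G ηh t‖) ⁻¹' {0} := by ext t; simp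
      rw [this]
      exact (hGsm ηh).norm.measurable (measurableSet_singleton 0)
    rw [ae_iff]
    simp only [not_not, ne_eq]
    by_contra hpos
    have hv : 0 < volume {t | G ηh t = 0} :=
      lt_of_lt_of_le (pos_iff_ne_zero.2 hpos) (Measure.restrict_apply_le _ _)
    have hp : MeasurePreserving (fun t : ℝ => τ - t) volume volume :=
      Measure.measurePreserving_sub_left volume τ
    refine hne (hUC ηh ((fun t : ℝ => τ - t) ⁻¹' {t | G ηh t = 0}) (hp.measurable hms) ?_ ?_)
    · rw [hp.measure_preimage hms.nullMeasurableSet]; exact hv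
    · intro t ht
      simpa [G] using ht
  -- derivative of `I`
  have hIder : ∀ ξ, HasDerivAt (fun ε : ℝ => I (ηh + ε • ξ))
      (∫ t, ⟪G ηh t, G ξ t⟫ / ‖G ηh t‖ ∂μ) 0 := by
    intro ξ
    simp only [I, hGadd]
    refine (hasDerivAt_integral_of_dominated_loc_of_lip (bound := fun t => ‖G ξ t‖)
      (F := fun (ε : ℝ) t => ‖G ηh t + ε • G ξ t‖) (s := Set.univ) Filter.univ_mem
      (Eventually.of_forall fun ε => ?_) ?_ ?_ ?_ (hGint ξ).norm ?_).2
    · exact (((hGsm ηh).add ((hGsm ξ).const_smul ε)).norm).aestronglyMeasurable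
    · simpa using (hGint ηh).norm
    · exact (((hGsm ηh).inner (hGsm ξ)).measurable.div
        (hGsm ηh).norm.measurable).aestronglyMeasurable
    · refine Eventually.of_forall fun t => ?_
      refine LipschitzOnWith.of_dist_le_mul fun x _ y _ => ?_
      simp only [Real.dist_eq, Real.coe_nnabs, abs_norm]
      refine (abs_norm_sub_norm_le _ _).trans ?_
      rw [add_sub_add_left_eq_sub, ← sub_smul, norm_smul, Real.norm_eq_abs, mul_comm]
    · exact hnz.mono fun t ht => aux_norm_deriv _ _ ht
  have hEL : ∀ ξ, I ηh * (∫ t, ⟪G ηh t, G ξ t⟫ / ‖G ηh t‖ ∂μ) + ⟪T τ ψ, ξ⟫ +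
      r * (⟪ηh, ξ⟫ / ‖ηh‖) = 0 := by
    intro ξ
    have hmin : IsLocalMin (fun ε : ℝ => Jfun T B r ψ τ (ηh + ε • ξ)) 0 :=
      Eventually.of_forall fun ε => by simpa using hηh (ηh + ε • ξ)
    refine hmin.hasDerivAt_eq_zero ?_
    simp only [hJ]
    have h1 := ((hIder ξ).pow 2).const_mul (1 / 2 : ℝ)
    have h2 : HasDerivAt (fun ε : ℝ => ⟪T τ ψ, ηh + ε • ξ⟫) ⟪T τ ψ, ξ⟫ 0 := by
      simp only [inner_add_right, inner_smul_right]
      simpa using ((hasDerivAt_id (0 : ℝ)).mul_const ⟪T τ ψ, ξ⟫).const_add ⟪T τ ψ, ηh⟫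
    have h3 := (aux_norm_deriv ηh ξ hne).const_mul r
    refine ((h1.add h2).add h3).congr_deriv ?_
    simp
    ring
  -- value
  have hval : I ηh ^ 2 + ⟪T τ ψ, ηh⟫ + r * ‖ηh‖ = 0 := by
    have h := hEL ηh
    have e1 : (∫ t, ⟪G ηh t, G ηh t⟫ / ‖G ηh t‖ ∂μ) = I ηh := by
      refine integral_congr_ae (Eventually.of_forall fun t => ?_)
      simp only [real_inner_self_eq_norm_sq, sq, mul_self_div_self]
    rw [e1, real_inner_self_eq_norm_sq, sq ‖ηh‖, mul_self_div_self] at h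
    rw [sq]; exact h
  have hJv : Jfun T B r ψ τ ηh = -(1 / 2) * I ηh ^ 2 := by
    rw [hJ]; linarith
  -- the optimal control
  have hNle : Nstar ≤ I ηh := by
    let fh : ℝ → U := fun t => (I ηh / ‖G ηh t‖) • G ηh t
    have hfhm : AEStronglyMeasurable fh μ :=
      ((measurable_const.div (hGsm ηh).norm.measurable).stronglyMeasurable.smul
        (hGsm ηh)).aestronglyMeasurable
    have hfhb : ∀ᵐ t ∂μ, ‖fh t‖ ≤ I ηh := by
      refine hnz.mono fun t ht => le_of_eq ?_
      have : ‖G ηh t‖ ≠ 0 := by simpa using ht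
      simp only [fh]
      rw [norm_smul, norm_div, norm_norm, Real.norm_of_nonneg (hI0 ηh), div_mul_cancel₀ _ this]
    refine hleast ⟨hI0 ηh, fh, by rwa [hμeq], by rwa [hμeq], ?_⟩
    have hz : traj T B ψ fh τ + (r / ‖ηh‖) • ηh = 0 := by
      refine ext_inner_right ℝ fun ξ => ?_
      rw [inner_zero_left, inner_add_left, traj, inner_add_left, ← hμ, hTB fh _ hfhm hfhb ξ,
        inner_smul_left, ← hEL ξ, ← integral_const_mul]
      have : (fun σ => ⟪fh σ, G ξ σ⟫) =
          fun t => I ηh * (⟪G ηh t, G ξ t⟫ / ‖G ηh t‖) := by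
        funext t
        simp only [fh, real_inner_smul_left]
        ring
      rw [this]
      simp only [conj_trivial]
      ring
    rw [mem_closedBall_zero_iff, eq_neg_of_add_eq_zero_left hz, norm_neg, norm_smul, norm_div,
      norm_norm, Real.norm_of_nonneg hr.le, div_mul_cancel₀ _ hnorm]
  refine le_antisymm ?_ hweak
  rw [hJv]
  nlinarith [hI0 ηh]
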